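/- arXiv:1610.02877 — 2 statements merged into one kernel-verified Lean document; each statement's English description precedes it below -/
import Mathlib

section
/- (Existence and uniqueness of the optimal entry threshold.) Let w : (0,∞) → (0,∞) be continuous with z ↦ w(z) integrable on (0,x) for every x > 0 and ∫₀^∞ w(z)dz = ∞. Let h : (0,∞) → ℝ be continuous and strictly increasing with lim_{x→0+} h(x) = 0, and let c > 0 be a constant with lim_{x→∞} h(x) > c (the limit possibly being +∞). Then there exists a unique x* > 0 such that ∫₀^{x*} (h(z) − c)·w(z)dz = 0; moreover h(x*) > c. -/
open Set Real MeasureTheory Filter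

/-!
Write `F x = ∫ z in a..x, (h z - c) * w z`. Wherever `h x ≤ c` the integrand is nonpositive on
`(a, x)`, and it is negative near `a`, so `F x < 0`; hence `c < h x` at every zero `x` of `F`.
Beyond such a point the integrand is positive, so `F` has no second zero. Finally `F` is continuous,
and it tends to `+∞` since the integrand eventually dominates a positive multiple of `w`, whose
integral diverges; so `F` does vanish somewhere.
-/

open scoped Topology

theorem le_of_monotoneOn_Ioi_of_tendsto_nhdsGT {α β : Type*} [LinearOrder α] [TopologicalSpace α]
    [OrderTopology α] [DenselyOrdered α] [Preorder β] [TopologicalSpace β] [ClosedIicTopology β]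
    {f : α → β} {a x : α} {l : β} (hf : MonotoneOn f (Ioi a)) (hl : Tendsto f (𝓝[>] a) (𝓝 l))
    (hx : a < x) : l ≤ f x := by
  have : (𝓝[>] a).NeBot := nhdsGT_neBot_of_exists_gt ⟨x, hx⟩
  refine le_of_tendsto hl ?_
  filter_upwards [Ioc_mem_nhdsGT hx] with y hy
  exact hf hy.1 hx hy.2

theorem integrableOn_mul_of_monotoneOn_of_mapsTo_Icc {g w : ℝ → ℝ} {s : Set ℝ} {μ : Measure ℝ}
    {l u : ℝ} (hs : MeasurableSet s) (hg : MonotoneOn g s) (hgs : MapsTo g s (Icc l u))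
    (hw : IntegrableOn w s μ) : IntegrableOn (fun z ↦ g z * w z) s μ := by
  refine hw.bdd_mul (c := max |l| |u|)
    (aemeasurable_restrict_of_monotoneOn hs hg).aestronglyMeasurable ?_
  filter_upwards [ae_restrict_mem hs] with z hz
  exact abs_le_max_abs_abs (hgs hz).1 (hgs hz).2

theorem intervalIntegral_neg_of_nonpos_of_eventually_neg {f : ℝ → ℝ} {a b : ℝ} (hab : a < b)
    (hf : IntervalIntegrable f volume a b) (hf_nonpos : ∀ z ∈ Ioo a b, f z ≤ 0)
    (hf_neg : ∀ᶠ z in 𝓝[>] a, f z < 0) : ∫ z in a..b, f z < 0 := by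
  obtain ⟨s, has, hs⟩ := mem_nhdsGT_iff_exists_Ioo_subset.1 hf_neg
  set m := min s b
  have ham : a < m := lt_min has hab
  have hmb : m ≤ b := min_le_right s b
  have hf_left : IntervalIntegrable f volume a m :=
    hf.mono_set (uIcc_subset_uIcc_left (mem_uIcc_of_le ham.le hmb))
  have hf_right : IntervalIntegrable f volume m b :=
    hf.mono_set (uIcc_subset_uIcc_right (mem_uIcc_of_le ham.le hmb))
  have h_left : 0 < ∫ z in a..m, -f z :=
    intervalIntegral.intervalIntegral_pos_of_pos_on hf_left.neg
      (fun z hz ↦ neg_pos.2 (hs ⟨hz.1, hz.2.trans_le (min_le_left s b)⟩)) ham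
  have h_right : ∫ z in m..b, f z ≤ ∫ _ in m..b, (0 : ℝ) :=
    intervalIntegral.integral_mono_on_of_le_Ioo hmb hf_right intervalIntegrable_const
      fun z hz ↦ hf_nonpos z ⟨ham.trans hz.1, hz.2⟩
  rw [intervalIntegral.integral_neg] at h_left
  rw [intervalIntegral.integral_zero] at h_right
  rw [← intervalIntegral.integral_add_adjacent_intervals hf_left hf_right]
  linarith

section Primitive

variable {f g : ℝ → ℝ} {a : ℝ} {μ : Measure ℝ}

theorem continuousOn_primitive_Ici [NullSingletonClass μ]
    (hf : ∀ x > a, IntervalIntegrable f μ a x) :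
    ContinuousOn (fun x ↦ ∫ z in a..x, f z ∂μ) (Ici a) := by
  intro x (hx : a ≤ x)
  have hx1 : x < x + 1 := lt_add_one x
  have h_Icc := intervalIntegral.continuousOn_primitive_interval'
    (hf (x + 1) (hx.trans_lt hx1)) left_mem_uIcc
  rw [uIcc_of_le (hx.trans hx1.le)] at h_Icc
  refine (h_Icc x ⟨hx, hx1.le⟩).mono_of_mem_nhdsWithin ?_
  filter_upwards [self_mem_nhdsWithin, mem_nhdsWithin_of_mem_nhds (Iic_mem_nhds hx1)]
    with y hy hy1 using ⟨hy, hy1⟩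

theorem tendsto_primitive_atTop_of_lintegral_eq_top (hf_nonneg : ∀ x ∈ Ioi a, 0 ≤ f x)
    (hf : ∀ x > a, IntervalIntegrable f μ a x)
    (hf_top : ∫⁻ z in Ioi a, ENNReal.ofReal (f z) ∂μ = ⊤) :
    Tendsto (fun x ↦ ∫ z in a..x, f z ∂μ) atTop atTop := by
  have h_cover : AECover (μ.restrict (Ioi a)) atTop Iic := aecover_Iic tendsto_id
  have h_restrict (x : ℝ) : (μ.restrict (Ioi a)).restrict (Iic x) = μ.restrict (Ioc a x) := by
    rw [Measure.restrict_restrict measurableSet_Iic, Iic_inter_Ioi]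
  have hf_meas : AEMeasurable f (μ.restrict (Ioi a)) := h_cover.aemeasurable fun x ↦ by
    rw [h_restrict]
    rcases le_or_gt x a with hxa | hax
    · simp [Ioc_eq_empty_of_le hxa]
    · exact (hf x hax).1.aemeasurable
  have h_lintegral : Tendsto (fun x ↦ ∫⁻ z in Iic x, ENNReal.ofReal (f z) ∂μ.restrict (Ioi a))
      atTop (𝓝 ⊤) := by
    rw [← hf_top]
    exact h_cover.lintegral_tendsto_of_countably_generated hf_meas.ennreal_ofReal
  rw [← ENNReal.tendsto_ofReal_nhds_top]
  refine h_lintegral.congr' ?_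
  filter_upwards [eventually_gt_atTop a] with x hx
  rw [h_restrict, intervalIntegral.integral_of_le hx.le,
    ofReal_integral_eq_lintegral_ofReal (hf x hx).1]
  exact ae_restrict_of_forall_mem measurableSet_Ioc fun z hz ↦ hf_nonneg z hz.1

theorem tendsto_primitive_atTop_of_eventually_le (hf : ∀ x > a, IntervalIntegrable f μ a x)
    (hg : ∀ x > a, IntervalIntegrable g μ a x) (hfg : ∀ᶠ x in atTop, f x ≤ g x)
    (hf_top : Tendsto (fun x ↦ ∫ z in a..x, f z ∂μ) atTop atTop) :
    Tendsto (fun x ↦ ∫ z in a..x, g z ∂μ) atTop atTop := by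
  obtain ⟨b, hab, hb⟩ : ∃ b > a, ∀ x ≥ b, f x ≤ g x :=
    (eventually_gt_atTop a |>.and (eventually_forall_ge_atTop.2 hfg)).exists
  refine tendsto_atTop_mono' atTop ?_ <|
    tendsto_atTop_add_const_right _ (∫ z in a..b, (g z - f z) ∂μ) hf_top
  filter_upwards [eventually_ge_atTop b] with x hbx
  have hax : a < x := hab.trans_le hbx
  have h_tail : 0 ≤ ∫ z in b..x, (g z - f z) ∂μ :=
    intervalIntegral.integral_nonneg hbx fun z hz ↦ sub_nonneg.2 (hb z hz.1)
  have h_split := intervalIntegral.integral_add_adjacent_intervals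
    ((hg b hab).sub (hf b hab))
    (((hg b hab).symm.trans (hg x hax)).sub ((hf b hab).symm.trans (hf x hax)))
  have h_sub := intervalIntegral.integral_sub (hg x hax) (hf x hax)
  linarith

end Primitive

section Threshold

variable {w h : ℝ → ℝ} {a c l : ℝ}

theorem intervalIntegrable_sub_const_mul_of_monotoneOn (hh : MonotoneOn h (Ioi a))
    (hl : Tendsto h (𝓝[>] a) (𝓝 l)) (hw : ∀ x ∈ Ioi a, IntegrableOn w (Ioo a x)) :
    ∀ x > a, IntervalIntegrable (fun z ↦ (h z - c) * w z) volume a x := by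
  intro x hx
  rw [intervalIntegrable_iff_integrableOn_Ioo_of_le hx.le]
  refine integrableOn_mul_of_monotoneOn_of_mapsTo_Icc (l := l - c) (u := h x - c)
    measurableSet_Ioo (fun y hy z hz hyz ↦ ?_) (fun z hz ↦ ⟨?_, ?_⟩) (hw x hx)
  · exact sub_le_sub_right (hh hy.1 hz.1 hyz) c
  · exact sub_le_sub_right (le_of_monotoneOn_Ioi_of_tendsto_nhdsGT hh hl hz.1) c
  · exact sub_le_sub_right (hh hz.1 hx hz.2.le) c

theorem intervalIntegral_sub_const_mul_neg_of_le (hw_pos : ∀ x ∈ Ioi a, 0 < w x)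
    (hh : MonotoneOn h (Ioi a)) (hl : Tendsto h (𝓝[>] a) (𝓝 l)) (hlc : l < c) {x : ℝ}
    (hax : a < x) (hf : IntervalIntegrable (fun z ↦ (h z - c) * w z) volume a x)
    (hx : h x ≤ c) : ∫ z in a..x, (h z - c) * w z < 0 := by
  refine intervalIntegral_neg_of_nonpos_of_eventually_neg hax hf (fun z hz ↦ ?_) ?_
  · exact mul_nonpos_of_nonpos_of_nonneg (sub_nonpos.2 ((hh hz.1 hax hz.2.le).trans hx))
      (hw_pos z hz.1).le
  · filter_upwards [hl.eventually_lt_const hlc, self_mem_nhdsWithin] with z hzc hz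
    exact mul_neg_of_neg_of_pos (sub_neg.2 hzc) (hw_pos z hz)

theorem strictMonoOn_primitive_sub_const_mul (hw_pos : ∀ x ∈ Ioi a, 0 < w x)
    (hh : MonotoneOn h (Ioi a))
    (hf : ∀ x > a, IntervalIntegrable (fun z ↦ (h z - c) * w z) volume a x) :
    StrictMonoOn (fun x ↦ ∫ z in a..x, (h z - c) * w z) {x ∈ Ioi a | c < h x} := by
  rintro x ⟨hax : a < x, hx⟩ y ⟨hay : a < y, -⟩ hxy
  have hf_xy := (hf x hax).symm.trans (hf y hay)
  have h_pos : 0 < ∫ z in x..y, (h z - c) * w z := by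
    refine intervalIntegral.intervalIntegral_pos_of_pos_on hf_xy (fun z hz ↦ ?_) hxy
    have haz : a < z := hax.trans hz.1
    exact mul_pos (sub_pos.2 (hx.trans_le (hh hax haz hz.1.le))) (hw_pos z haz)
  have h_split := intervalIntegral.integral_add_adjacent_intervals (hf x hax) hf_xy
  linarith

theorem tendsto_primitive_sub_const_mul_atTop (hw_pos : ∀ x ∈ Ioi a, 0 < w x)
    (hw : ∀ x ∈ Ioi a, IntegrableOn w (Ioo a x))
    (hw_top : ∫⁻ z in Ioi a, ENNReal.ofReal (w z) = ⊤) (hh : MonotoneOn h (Ioi a))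
    (hf : ∀ x > a, IntervalIntegrable (fun z ↦ (h z - c) * w z) volume a x)
    (hc : ∀ᶠ x in atTop, c < h x) :
    Tendsto (fun x ↦ ∫ z in a..x, (h z - c) * w z) atTop atTop := by
  have hw_int : ∀ x > a, IntervalIntegrable w volume a x := fun x hx ↦
    (intervalIntegrable_iff_integrableOn_Ioo_of_le hx.le).2 (hw x hx)
  obtain ⟨b, hab, hb⟩ : ∃ b > a, c < h b := (eventually_gt_atTop a |>.and hc).exists
  refine tendsto_primitive_atTop_of_eventually_le
    (fun x hx ↦ (hw_int x hx).const_mul (h b - c)) hf ?_ ?_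
  · filter_upwards [eventually_ge_atTop b] with x hbx
    have hax : a < x := lt_of_lt_of_le hab hbx
    exact mul_le_mul_of_nonneg_right (sub_le_sub_right (hh hab hax hbx) c) (hw_pos x hax).le
  · simp only [intervalIntegral.integral_const_mul]
    exact (tendsto_primitive_atTop_of_lintegral_eq_top (fun x hx ↦ (hw_pos x hx).le) hw_int
      hw_top).const_mul_atTop (sub_pos.2 hb)

theorem optimal_threshold_exists_unique_general (hw_pos : ∀ x ∈ Ioi a, 0 < w x)
    (hw : ∀ x ∈ Ioi a, IntegrableOn w (Ioo a x))
    (hw_top : ∫⁻ z in Ioi a, ENNReal.ofReal (w z) = ⊤)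
    (hh : MonotoneOn h (Ioi a)) (hl : Tendsto h (𝓝[>] a) (𝓝 l)) (hlc : l < c)
    (hc : ∀ᶠ x in atTop, c < h x) :
    ∃ xs : ℝ, (a < xs ∧ (∫ z in Ioo a xs, (h z - c) * w z) = 0 ∧ c < h xs) ∧
      ∀ y : ℝ, a < y → (∫ z in Ioo a y, (h z - c) * w z) = 0 → y = xs := by
  set F : ℝ → ℝ := fun x ↦ ∫ z in a..x, (h z - c) * w z
  have hF : ∀ x > a, ∫ z in Ioo a x, (h z - c) * w z = F x := fun x hx ↦ by
    rw [← integral_Ioc_eq_integral_Ioo, ← intervalIntegral.integral_of_le hx.le]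
  have hf := intervalIntegrable_sub_const_mul_of_monotoneOn (c := c) hh hl hw
  have h_gt_of_zero : ∀ x > a, F x = 0 → c < h x := fun x hx hFx ↦ lt_of_not_ge fun hxc ↦
    (intervalIntegral_sub_const_mul_neg_of_le hw_pos hh hl hlc hx (hf x hx) hxc).ne hFx
  obtain ⟨s, hsc, has⟩ : ∃ s, h s < c ∧ a < s :=
    ((hl.eventually_lt_const hlc).and self_mem_nhdsWithin).exists
  have hFs : F s < 0 :=
    intervalIntegral_sub_const_mul_neg_of_le hw_pos hh hl hlc has (hf s has) hsc.le
  obtain ⟨xs, hsx, hFx⟩ : ∃ xs ∈ Ici s, F xs = 0 :=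
    intermediate_value_Ici ((continuousOn_primitive_Ici hf).mono (Ici_subset_Ici.2 has.le))
      (tendsto_primitive_sub_const_mul_atTop hw_pos hw hw_top hh hf hc) hFs.le
  have hax : a < xs := lt_of_lt_of_le has hsx
  refine ⟨xs, ⟨hax, (hF xs hax).trans hFx, h_gt_of_zero xs hax hFx⟩, fun y hay hy ↦ ?_⟩
  have hFy : F y = 0 := (hF y hay).symm.trans hy
  exact (strictMonoOn_primitive_sub_const_mul hw_pos hh hf).injOn
    ⟨hay, h_gt_of_zero y hay hFy⟩ ⟨hax, h_gt_of_zero xs hax hFx⟩ (hFy.trans hFx.symm)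

end Threshold

/-- (Existence and uniqueness of the optimal entry threshold.)
Let `w > 0` be continuous on `(0,∞)`, locally integrable near `0`, with
`∫₀^∞ w = ∞`. Let `h` be continuous and strictly increasing on `(0,∞)` with
`h(0+) = 0`, and let `c > 0` with `lim_{x→∞} h(x) > c` (possibly `+∞`). Then there is a
unique `x* > 0` with `∫₀^{x*} (h(z) − c)·w(z) dz = 0`, and moreover `h(x*) > c`. -/
theorem optimal_threshold_exists_unique
    (w h : ℝ → ℝ) (c : ℝ)
    (hwc : ContinuousOn w (Ioi 0))
    (hwpos : ∀ x ∈ Ioi (0 : ℝ), 0 < w x)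
    (hwint : ∀ x ∈ Ioi (0 : ℝ), IntegrableOn w (Ioo 0 x))
    (hwinf : ∫⁻ z in Ioi (0 : ℝ), ENNReal.ofReal (w z) = ⊤)
    (hhc : ContinuousOn h (Ioi 0))
    (hhmono : StrictMonoOn h (Ioi 0))
    (hh0 : Tendsto h (nhdsWithin 0 (Ioi 0)) (nhds 0))
    (hc : 0 < c)
    (hhlim : Tendsto h atTop atTop ∨ ∃ L : ℝ, Tendsto h atTop (nhds L) ∧ c < L) :
    ∃ xs : ℝ, (0 < xs ∧ (∫ z in Ioo (0 : ℝ) xs, (h z - c) * w z) = 0 ∧ c < h xs) ∧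
      ∀ y : ℝ, 0 < y → (∫ z in Ioo (0 : ℝ) y, (h z - c) * w z) = 0 → y = xs :=
  optimal_threshold_exists_unique_general hwpos hwint hwinf hhmono.monotoneOn hh0 hc <|
    hhlim.elim (·.eventually_gt_atTop c) fun ⟨_, hL, hcL⟩ ↦ hL.eventually_const_lt hcL
end

section
/- (Explicit optimal entry threshold for the square-root payoff under geometric Brownian motion.) Let α, β, r, λ > 0 and K, C ≥ 0 with K + C > 0. Set ρ = r + λ, a = a(ρ), b = b(ρ), and c = K + C/(r+λ). Then x* = [ (1/2 − a) · (1/2)·β²·b·c ]² is a positive real number satisfying (2/β²)·∫₀^{x*} z^{−(a+1)}·√z dz = c·b·(x*)^{b + 2α/β² − 1}, i.e. x* solves the optimal-threshold equation for the payoff h(x) = √x. -/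
open Set Real MeasureTheory

/-!
Against a power payoff `z ^ γ` the integrand of the threshold equation is the single power
`z ^ (γ - a - 1)`, integrable at `0` because `a < γ`, so the left-hand side is a multiple of
`x ^ (γ - a)`. The two roots sum to `1 - 2α/β²`, so the right-hand side is a multiple of `x ^ (-a)`.
Dividing by `x ^ (-a)` leaves an equation for `x ^ γ` alone.
-/

noncomputable section

/-- The larger root `b(ρ)` of `(1/2)β²θ(θ - 1) + αθ = ρ`, the exponent of the increasing
`ρ`-harmonic function of geometric Brownian motion with drift `α` and volatility `β`. -/
def gbmUpperRoot (α β ρ : ℝ) : ℝ :=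
  (1 / 2 - α / β ^ 2) + √((1 / 2 - α / β ^ 2) ^ 2 + 2 * ρ / β ^ 2)

/-- The smaller root `a(ρ)` of `(1/2)β²θ(θ - 1) + αθ = ρ`, the exponent of the decreasing
`ρ`-harmonic function of geometric Brownian motion with drift `α` and volatility `β`. -/
def gbmLowerRoot (α β ρ : ℝ) : ℝ :=
  (1 / 2 - α / β ^ 2) - √((1 / 2 - α / β ^ 2) ^ 2 + 2 * ρ / β ^ 2)

/-- `x` is a positive solution of the optimal entry threshold equation for geometric Brownian
motion with running payoff `h`. Here `ρ` is the discount rate plus the exit intensity, and `c` is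
the entry cost plus the expected discounted running cost. The integral is the Bochner integral, so
the left-hand side is `0` when the integrand is not integrable. -/
def IsGbmEntryThreshold (α β ρ c : ℝ) (h : ℝ → ℝ) (x : ℝ) : Prop :=
  0 < x ∧
    (2 / β ^ 2) * ∫ z in Ioo (0 : ℝ) x, z ^ (-(gbmLowerRoot α β ρ + 1)) * h z
      = c * gbmUpperRoot α β ρ * x ^ (gbmUpperRoot α β ρ + 2 * α / β ^ 2 - 1)

end

theorem setIntegral_Ioo_zero_rpow {p x : ℝ} (hp : -1 < p) (hx : 0 ≤ x) :
    ∫ z in Ioo 0 x, z ^ p = x ^ (p + 1) / (p + 1) := by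
  rw [← integral_Ioc_eq_integral_Ioo, ← intervalIntegral.integral_of_le hx,
    integral_rpow (Or.inl hp), zero_rpow (by linarith), sub_zero]

theorem setIntegral_Ioo_zero_rpow_mul_rpow {p q x : ℝ} (hpq : -1 < p + q) (hx : 0 ≤ x) :
    ∫ z in Ioo 0 x, z ^ p * z ^ q = x ^ (p + q + 1) / (p + q + 1) := by
  rw [← setIntegral_Ioo_zero_rpow hpq hx]
  exact setIntegral_congr_fun measurableSet_Ioo fun z hz => (rpow_add hz.1 p q).symm

section

variable {α β ρ c γ x : ℝ}

theorem gbmUpperRoot_add_sub_one_eq_neg_gbmLowerRoot :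
    gbmUpperRoot α β ρ + 2 * α / β ^ 2 - 1 = -gbmLowerRoot α β ρ := by
  unfold gbmUpperRoot gbmLowerRoot
  ring

theorem gbmUpperRoot_pos (hβ : β ≠ 0) (hρ : 0 < ρ) : 0 < gbmUpperRoot α β ρ := by
  have hlt : -(1 / 2 - α / β ^ 2) < √((1 / 2 - α / β ^ 2) ^ 2 + 2 * ρ / β ^ 2) := by
    refine lt_sqrt_of_sq_lt ?_
    rw [neg_sq]
    exact lt_add_of_pos_right _ (by positivity)
  exact neg_lt_iff_pos_add'.mp hlt

theorem gbmLowerRoot_neg (hβ : β ≠ 0) (hρ : 0 < ρ) : gbmLowerRoot α β ρ < 0 :=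
  sub_neg.mpr <| lt_sqrt_of_sq_lt <| lt_add_of_pos_right _ (by positivity)

theorem isGbmEntryThreshold_rpow_iff_rpow_eq (hβ : β ≠ 0) (hγ : gbmLowerRoot α β ρ < γ) :
    IsGbmEntryThreshold α β ρ c (fun z => z ^ γ) x ↔
      0 < x ∧ x ^ γ = (γ - gbmLowerRoot α β ρ) * ((1 / 2) * β ^ 2 * gbmUpperRoot α β ρ * c) := by
  refine and_congr_right fun hx => ?_
  rw [gbmUpperRoot_add_sub_one_eq_neg_gbmLowerRoot,
    setIntegral_Ioo_zero_rpow_mul_rpow (by linarith) hx.le]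
  generalize gbmUpperRoot α β ρ = b
  generalize gbmLowerRoot α β ρ = a at hγ ⊢
  have hd : γ - a ≠ 0 := (sub_pos.mpr hγ).ne'
  have hxa : x ^ (-a) ≠ 0 := (rpow_pos_of_pos hx _).ne'
  have lhs_eq : 2 / β ^ 2 * (x ^ (-(a + 1) + γ + 1) / (-(a + 1) + γ + 1)) =
      2 / β ^ 2 * (x ^ γ / (γ - a)) * x ^ (-a) := by
    rw [show -(a + 1) + γ + 1 = γ - a by ring, sub_eq_add_neg, rpow_add hx]
    ring
  rw [lhs_eq, mul_left_inj' hxa, div_mul_div_comm, div_eq_iff (mul_ne_zero (pow_ne_zero 2 hβ) hd)]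
  constructor <;> intro h <;> linarith

theorem gbm_sqrt_payoff_threshold_general (hβ : β ≠ 0) (hρ : 0 < ρ) (hc : 0 < c) (hγ₀ : γ ≠ 0)
    (hγ : gbmLowerRoot α β ρ < γ) :
    IsGbmEntryThreshold α β ρ c (fun z => z ^ γ) x ↔
      x = ((γ - gbmLowerRoot α β ρ) * ((1 / 2) * β ^ 2 * gbmUpperRoot α β ρ * c)) ^ γ⁻¹ := by
  have hb : 0 < gbmUpperRoot α β ρ := gbmUpperRoot_pos hβ hρ
  have base_pos :
      0 < (γ - gbmLowerRoot α β ρ) * ((1 / 2) * β ^ 2 * gbmUpperRoot α β ρ * c) :=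
    mul_pos (sub_pos.mpr hγ) (by positivity)
  rw [isGbmEntryThreshold_rpow_iff_rpow_eq hβ hγ]
  constructor
  · rintro ⟨hx, hxγ⟩
    rw [← hxγ, rpow_rpow_inv hx.le hγ₀]
  · rintro rfl
    exact ⟨rpow_pos_of_pos base_pos _, rpow_inv_rpow base_pos.le hγ₀⟩

theorem isGbmEntryThreshold_sqrt_iff (hβ : β ≠ 0) (hρ : 0 < ρ) (hc : 0 < c) :
    IsGbmEntryThreshold α β ρ c sqrt x ↔
      x = ((1 / 2 - gbmLowerRoot α β ρ) * ((1 / 2) * β ^ 2 * gbmUpperRoot α β ρ * c)) ^ 2 := by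
  have ha : gbmLowerRoot α β ρ < 1 / 2 := (gbmLowerRoot_neg hβ hρ).trans one_half_pos
  have inv_half : (1 / 2 : ℝ)⁻¹ = 2 := by norm_num
  rw [funext sqrt_eq_rpow, gbm_sqrt_payoff_threshold_general hβ hρ hc one_half_pos.ne' ha,
    inv_half, rpow_two]

end

theorem add_div_pos_of_add_pos {𝕜 : Type*} [Field 𝕜] [LinearOrder 𝕜] [IsStrictOrderedRing 𝕜]
    {K C ρ : 𝕜} (hK : 0 ≤ K) (hC : 0 ≤ C) (hKC : 0 < K + C) (hρ : 0 < ρ) :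
    0 < K + C / ρ := by
  rcases hK.eq_or_lt with rfl | hK
  · rw [zero_add] at hKC ⊢
    exact div_pos hKC hρ
  · positivity

/-- (Explicit optimal entry threshold for the square-root payoff under
geometric Brownian motion.) With `ρ = r + λ`, `a = a(ρ)`, `b = b(ρ)` and
`c = K + C/(r+λ)`, the number `x* = [(1/2 − a)·(1/2)·β²·b·c]²` is positive and satisfies
`(2/β²)·∫₀^{x*} z^(−(a+1))·√z dz = c·b·(x*)^(b + 2α/β² − 1)`, i.e. it solves the
optimal-threshold equation for the payoff `h(x) = √x`. -/
theorem gbm_sqrt_payoff_threshold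
    (α β r lam K C : ℝ) (hα : 0 < α) (hβ : 0 < β) (hr : 0 < r) (hlam : 0 < lam)
    (hK : 0 ≤ K) (hC : 0 ≤ C) (hKC : 0 < K + C)
    (ρ b a c xs : ℝ)
    (hρ : ρ = r + lam)
    (hb : b = (1 / 2 - α / β ^ 2) + Real.sqrt ((1 / 2 - α / β ^ 2) ^ 2 + 2 * ρ / β ^ 2))
    (ha : a = (1 / 2 - α / β ^ 2) - Real.sqrt ((1 / 2 - α / β ^ 2) ^ 2 + 2 * ρ / β ^ 2))
    (hc : c = K + C / (r + lam))
    (hxs : xs = ((1 / 2 - a) * ((1 / 2) * β ^ 2 * b * c)) ^ 2) :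
    0 < xs ∧
    (2 / β ^ 2) * ∫ z in Ioo (0 : ℝ) xs, z ^ (-(a + 1)) * Real.sqrt z
      = c * b * xs ^ (b + 2 * α / β ^ 2 - 1) := by
  subst hρ hb ha hc
  have hρ : 0 < r + lam := add_pos hr hlam
  have hc : 0 < K + C / (r + lam) := add_div_pos_of_add_pos hK hC hKC hρ
  exact (isGbmEntryThreshold_sqrt_iff hβ.ne' hρ hc).mpr hxs
end
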